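/- arXiv:math/9801151 — 2 statements merged into one kernel-verified Lean document; each statement's English description precedes it below -/
import Mathlib

section
/- Let 0 < n < ω and let D_0, …, D_{n−1} be Ramsey ultrafilters on ℕ which are pairwise not RK-equivalent, and let ⟨m(l) : l < ω⟩ be a strictly increasing sequence of natural numbers. Then there exist a strictly increasing sequence of indices ⟨l_j : j < ω⟩ and sets Z_i ∈ D_i (for i < n) such that: (1) l_{j+1} − l_j ≥ 2 for every j < ω; (2) Z_i ⊆ ⋃_{j ≡ i (mod n)} [m(l_j), m(l_{j+1})) for every i < n; and (3) for every i < n and every j with j ≡ i (mod n), the set Z_i ∩ [m(l_j), m(l_{j+1})) has exactly one element. -/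
/-- `D` is a Ramsey ultrafilter on ℕ: it is nonprincipal and for every partition of ℕ
(given as fibers of `f`) into sets none of which belongs to `D`, there is `A ∈ D`
meeting each piece in at most one point. -/
def IsRamseyUF (D : Ultrafilter ℕ) : Prop :=
  (∀ a : ℕ, ({a} : Set ℕ) ∉ D) ∧
    ∀ f : ℕ → ℕ, (∀ m : ℕ, f ⁻¹' {m} ∉ D) →
      ∃ A ∈ D, ∀ m : ℕ, (A ∩ f ⁻¹' {m}).Subsingleton

/-- The ultrafilters `D i` are pairwise not Rudin–Keisler-equivalent. -/
def PairwiseNotRKEquiv {n : ℕ} (D : Fin n → Ultrafilter ℕ) : Prop :=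
  ∀ i j : Fin n, i ≠ j → ∀ f : ℕ → ℕ, Ultrafilter.map f (D i) ≠ D j

/-!
A function tending to infinity is injective on a set of each Ramsey ultrafilter `D i`, so, the `D i`
being pairwise not RK-equivalent, its images of different `D i` differ, even after a shift. Applied
to the index `f x` of the interval of `m` containing `x`, this gives sets `W i ∈ D i` on whose union
the indices are as far apart as we like. Enumerate that union by index as `w 0, w 1, …`, and cut out
`n` consecutive blocks around each `w t`, so that `w t ∈ W i` falls into the block number
`n * t + i` (hence `≡ i` modulo `n`); gaps of more than twice the length of `n` blocks leave room
for this. The other blocks receive an arbitrary point.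
-/

open Filter Function Set

section Filters

variable {α β γ : Type*}

theorem eventually_prod_ne_of_map_ne {D : Ultrafilter α} {E : Ultrafilter γ} {u : α → β}
    {v : γ → β} (h : D.map u ≠ E.map v) :
    ∀ᶠ p in (D : Filter α) ×ˢ (E : Filter γ), u p.1 ≠ v p.2 := by
  have hdisj : Disjoint (D.map u : Filter β) (E.map v) :=
    Ultrafilter.disjoint_iff_not_le.2 fun hle => h (Ultrafilter.coe_le_coe.1 hle)
  obtain ⟨s, hs, t, ht, hst⟩ := Filter.disjoint_iff.1 hdisj
  filter_upwards [prod_mem_prod (mem_map.1 hs) (mem_map.1 ht)] with p hp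
  exact hst.ne_of_mem hp.1 hp.2

theorem exists_map_eq_of_map_eq_of_injOn {D : Ultrafilter α} {E : Ultrafilter γ} {u : α → β}
    {v : γ → β} {B : Set γ} (hB : B ∈ E) (hv : InjOn v B) (h : D.map u = E.map v) :
    ∃ f : α → γ, D.map f = E := by
  have : Nonempty γ := E.neBot.nonempty
  refine ⟨invFunOn v B ∘ u, ?_⟩
  rw [← Ultrafilter.map_map, h, Ultrafilter.map_map]
  have hleft : invFunOn v B ∘ v =ᶠ[(E : Filter γ)] id := by
    filter_upwards [hB] with x hx using hv.leftInvOn_invFunOn hx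
  apply Ultrafilter.coe_injective
  rw [Ultrafilter.coe_map, Filter.map_congr hleft, Filter.map_id]

theorem exists_mem_forall_of_eventually_prod {ι : Type*} [Finite ι] {l : ι → Filter α}
    {R : ι → ι → α → α → Prop} (h : ∀ i j, ∀ᶠ p in l i ×ˢ l j, R i j p.1 p.2) :
    ∃ W : ι → Set α, (∀ i, W i ∈ l i) ∧ ∀ i j, ∀ x ∈ W i, ∀ y ∈ W j, R i j x y := by
  choose A hA B hB hAB using fun i j => mem_prod_iff.1 (h i j)
  refine ⟨fun i => (⋂ j, A i j) ∩ ⋂ j, B j i, fun i => ?_, fun i j x hx y hy => ?_⟩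
  · exact inter_mem (iInter_mem.2 fun j => hA i j) (iInter_mem.2 fun j => hB j i)
  · exact hAB i j (mk_mem_prod (mem_iInter.1 hx.1 j) (mem_iInter.1 hy.2 i))

end Filters

/-- A Q-point: a nonprincipal ultrafilter on `ℕ` such that every finite-to-one function is
injective on one of its sets. For functions `ℕ → ℕ`, finite-to-one means tending to infinity, and
an ultrafilter on `ℕ` is nonprincipal iff it contains all final segments. -/
structure IsQPoint (D : Ultrafilter ℕ) : Prop where
  le_atTop : (D : Filter ℕ) ≤ atTop
  exists_injOn : ∀ f : ℕ → ℕ, Tendsto f atTop atTop → ∃ A ∈ D, InjOn f A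

theorem IsRamseyUF.le_atTop {D : Ultrafilter ℕ} (h : IsRamseyUF D) : (D : Filter ℕ) ≤ atTop := by
  rw [← Nat.cofinite_eq_atTop]
  refine D.le_cofinite_or_eq_pure.resolve_right ?_
  rintro ⟨a, rfl⟩
  exact h.1 a (Ultrafilter.mem_pure.2 rfl)

theorem IsRamseyUF.isQPoint {D : Ultrafilter ℕ} (h : IsRamseyUF D) : IsQPoint D where
  le_atTop := h.le_atTop
  exists_injOn f hf := by
    have hfiber (c : ℕ) : f ⁻¹' {c} ∉ D :=
      Ultrafilter.compl_mem_iff_notMem.1 ((hf.mono_left h.le_atTop).eventually_ne_atTop c)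
    obtain ⟨A, hA, hsub⟩ := h.2 f hfiber
    exact ⟨A, hA, fun x hx y hy hxy => hsub (f y) ⟨hx, hxy⟩ ⟨hy, rfl⟩⟩

section Separation

variable {f : ℕ → ℕ} {D E : Ultrafilter ℕ}

theorem IsQPoint.infinite_image (hD : IsQPoint D) (hf : Tendsto f atTop atTop) {s : Set ℕ}
    (hs : s ∈ D) : (f '' s).Infinite := by
  have himage : ∀ᶠ x in (D : Filter ℕ), f x ∈ f '' s :=
    mem_of_superset hs (subset_preimage_image f s)
  exact Nat.frequently_atTop_iff_infinite.1
    ((hf.mono_left hD.le_atTop).frequently himage.frequently)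

theorem IsQPoint.map_ne_map (hE : IsQPoint E) (hDE : ∀ g : ℕ → ℕ, D.map g ≠ E) (u : ℕ → ℕ)
    {v : ℕ → ℕ} (hv : Tendsto v atTop atTop) : D.map u ≠ E.map v := by
  intro h
  obtain ⟨B, hB, hinj⟩ := hE.exists_injOn v hv
  obtain ⟨g, hg⟩ := exists_map_eq_of_map_eq_of_injOn hB hinj h
  exact hDE g hg

theorem IsQPoint.eventually_prod_le_dist (hE : IsQPoint E) (hDE : ∀ g : ℕ → ℕ, D.map g ≠ E)
    (hf : Tendsto f atTop atTop) (N : ℕ) :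
    ∀ᶠ p in (D : Filter ℕ) ×ˢ (E : Filter ℕ), N ≤ Nat.dist (f p.1) (f p.2) := by
  have hright : ∀ᶠ p in (D : Filter ℕ) ×ˢ (E : Filter ℕ), ∀ k ∈ Finset.range N,
      f p.1 + k ≠ f p.2 :=
    (eventually_all_finset _).2 fun k _ =>
      eventually_prod_ne_of_map_ne (hE.map_ne_map hDE (fun x => f x + k) hf)
  have hleft : ∀ᶠ p in (D : Filter ℕ) ×ˢ (E : Filter ℕ), ∀ k ∈ Finset.range N,
      f p.1 ≠ f p.2 + k :=
    (eventually_all_finset _).2 fun k _ =>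
      eventually_prod_ne_of_map_ne (hE.map_ne_map hDE f
        (tendsto_atTop_mono (fun x => Nat.le_add_right (f x) k) hf))
  filter_upwards [hright, hleft] with p h₁ h₂
  by_contra! hlt
  rcases le_total (f p.1) (f p.2) with hle | hle
  · rw [Nat.dist_eq_sub_of_le hle] at hlt
    exact h₁ _ (Finset.mem_range.2 hlt) (Nat.add_sub_of_le hle)
  · rw [Nat.dist_eq_sub_of_le_right hle] at hlt
    exact h₂ _ (Finset.mem_range.2 hlt) (Nat.add_sub_of_le hle).symm

theorem IsQPoint.eventually_prod_self_le_dist (hD : IsQPoint D) (hf : Tendsto f atTop atTop)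
    {N : ℕ} (hN : 0 < N) :
    ∀ᶠ p in (D : Filter ℕ) ×ˢ (D : Filter ℕ), p.1 ≠ p.2 → N ≤ Nat.dist (f p.1) (f p.2) := by
  obtain ⟨A, hA, hinj⟩ := hD.exists_injOn f hf
  obtain ⟨r, -, hr⟩ : ∃ r ∈ Iio N, ∀ᶠ x in (D : Filter ℕ), f x % N = r :=
    (Ultrafilter.eventually_exists_mem_iff (finite_Iio N)).1
      (Eventually.of_forall fun x => ⟨f x % N, Nat.mod_lt _ hN, rfl⟩)
  have hAr : A ∩ {x | f x % N = r} ∈ (D : Filter ℕ) := inter_mem hA hr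
  filter_upwards [prod_mem_prod hAr hAr] with p ⟨⟨hx, hxr⟩, hy, hyr⟩ hne
  have hmod : f p.1 ≡ f p.2 [MOD N] := hxr.trans hyr.symm
  have hfne : f p.1 ≠ f p.2 := fun h => hne (hinj hx hy h)
  rcases hfne.lt_or_gt with hlt | hlt
  · rw [Nat.dist_eq_sub_of_le hlt.le]
    exact Nat.le_of_dvd (Nat.sub_pos_of_lt hlt) ((Nat.modEq_iff_dvd' hlt.le).1 hmod)
  · rw [Nat.dist_eq_sub_of_le_right hlt.le]
    exact Nat.le_of_dvd (Nat.sub_pos_of_lt hlt) ((Nat.modEq_iff_dvd' hlt.le).1 hmod.symm)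

theorem exists_mem_forall_le_dist {n : ℕ} {D : Fin n → Ultrafilter ℕ}
    (hQ : ∀ i, IsQPoint (D i)) (hRK : PairwiseNotRKEquiv D) (hf : Tendsto f atTop atTop)
    (K : ℕ) {N : ℕ} (hN : 0 < N) :
    ∃ W : Fin n → Set ℕ, (∀ i, W i ∈ D i) ∧ (∀ i, ∀ x ∈ W i, K < f x) ∧
      ∀ i j, ∀ x ∈ W i, ∀ y ∈ W j, (i, x) ≠ (j, y) → N ≤ Nat.dist (f x) (f y) := by
  have hsep (i j : Fin n) : ∀ᶠ p in (D i : Filter ℕ) ×ˢ (D j : Filter ℕ),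
      (i, p.1) ≠ (j, p.2) → N ≤ Nat.dist (f p.1) (f p.2) := by
    rcases eq_or_ne i j with rfl | hij
    · filter_upwards [(hQ i).eventually_prod_self_le_dist hf hN] with p hp hne
      exact hp fun h => hne (congrArg (Prod.mk i) h)
    · filter_upwards [(hQ j).eventually_prod_le_dist (hRK i j hij) hf N] with p hp _ using hp
  have hlarge (i : Fin n) : ∀ᶠ x in (D i : Filter ℕ), K < f x :=
    (hf.mono_left (hQ i).le_atTop).eventually_gt_atTop K
  obtain ⟨W, hWD, hW⟩ :=
    exists_mem_forall_of_eventually_prod (l := fun i => (D i : Filter ℕ))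
      (R := fun i j x y => (i, x) ≠ (j, y) → N ≤ Nat.dist (f x) (f y)) hsep
  exact ⟨fun i => W i ∩ {x | K < f x}, fun i => inter_mem (hWD i) (hlarge i),
    fun i x hx => hx.2, fun i j x hx y hy => hW i j x hx.1 y hy.1⟩

end Separation

section Combinatorics

theorem exists_range_eq_forall_add_le {s : Set ℕ} (hs : s.Infinite) {N : ℕ}
    (hsep : s.Pairwise fun x y => N ≤ Nat.dist x y) :
    ∃ w : ℕ → ℕ, range w = s ∧ ∀ t, w t + N ≤ w (t + 1) := by
  set w : ℕ → ℕ := Nat.nth fun x => x ∈ s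
  have hrange : range w = s := Nat.range_nth_of_infinite hs
  have hmem (t : ℕ) : w t ∈ s := hrange ▸ mem_range_self t
  refine ⟨w, hrange, fun t => ?_⟩
  have hlt : w t < w (t + 1) := Nat.nth_strictMono hs t.lt_succ_self
  have hdist : N ≤ Nat.dist (w t) (w (t + 1)) := hsep (hmem t) (hmem (t + 1)) hlt.ne
  rw [Nat.dist_eq_sub_of_le hlt.le] at hdist
  omega

theorem div_add_mul_mod_add_le_succ {n d : ℕ} (hn : 0 < n) {g : ℕ → ℕ}
    (hg : ∀ t, g t + d * n ≤ g (t + 1)) (j : ℕ) :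
    g (j / n) + d * (j % n) + d ≤ g ((j + 1) / n) + d * ((j + 1) % n) := by
  have hj := Nat.div_add_mod j n
  rcases (Nat.succ_le_of_lt (Nat.mod_lt j hn)).lt_or_eq with hlt | heq
  · obtain ⟨hdiv, hmod⟩ : (j + 1) / n = j / n ∧ (j + 1) % n = j % n + 1 :=
      (Nat.div_mod_unique hn).2 ⟨by omega, hlt⟩
    rw [hdiv, hmod, Nat.mul_succ, Nat.add_assoc]
  · obtain ⟨hdiv, hmod⟩ : (j + 1) / n = j / n + 1 ∧ (j + 1) % n = 0 :=
      (Nat.div_mod_unique hn).2 ⟨by rw [Nat.mul_succ]; omega, hn⟩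
    calc g (j / n) + d * (j % n) + d = g (j / n) + d * (j % n).succ := by
          rw [Nat.mul_succ, Nat.add_assoc]
      _ = g (j / n) + d * n := by rw [heq]
      _ ≤ g (j / n + 1) := hg (j / n)
      _ = g ((j + 1) / n) + d * ((j + 1) % n) := by
          simp only [hdiv, hmod, Nat.mul_zero, Nat.add_zero]

theorem exists_spaced_seq_of_separated {n d : ℕ} {V : Fin n → Set ℕ}
    (hinf : (⋃ i, V i).Infinite) (hlarge : ∀ i, ∀ v ∈ V i, d * n < v)
    (hsep : ∀ i j, ∀ v ∈ V i, ∀ w ∈ V j, (i, v) ≠ (j, w) → 2 * (d * n) < Nat.dist v w) :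
    ∃ l : ℕ → ℕ, (∀ j, l j + d ≤ l (j + 1)) ∧
      ∀ i, ∀ v ∈ V i, ∃ j, j % n = (i : ℕ) ∧ v = l j + 1 := by
  have hpairwise : (⋃ i, V i).Pairwise fun v w => 2 * (d * n) ≤ Nat.dist v w := by
    intro v hv w hw hvw
    obtain ⟨i, hi⟩ := mem_iUnion.1 hv
    obtain ⟨j, hj⟩ := mem_iUnion.1 hw
    exact (hsep i j v hi w hj fun h => hvw (congrArg Prod.snd h)).le
  obtain ⟨w, hrange, hgap⟩ := exists_range_eq_forall_add_le hinf hpairwise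
  choose c hc using fun t => mem_iUnion.1 (hrange ▸ mem_range_self t : w t ∈ ⋃ i, V i)
  have hn : 0 < n := (c 0).pos
  have hc_unique {t : ℕ} {i : Fin n} (hi : w t ∈ V i) : c t = i := by
    by_contra hne
    have hdist := hsep _ _ _ (hc t) _ hi fun h => hne (congrArg Prod.fst h)
    rw [Nat.dist_self] at hdist
    exact Nat.not_lt_zero _ hdist
  have hcn (t : ℕ) : d * c t ≤ d * n := Nat.mul_le_mul_left d (c t).is_lt.le
  -- `g t` will be `l (n * t)`, chosen to make `w t` the successor of `l (n * t + c t)`.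
  set g : ℕ → ℕ := fun t => w t - 1 - d * c t
  have hg (t : ℕ) : w t = g t + d * c t + 1 := by
    have := hlarge _ _ (hc t)
    have := hcn t
    simp only [g]
    omega
  refine ⟨fun j => g (j / n) + d * (j % n), div_add_mul_mod_add_le_succ hn fun t => ?_,
    fun i v hv => ?_⟩
  · have := hgap t
    have := hg t
    have := hg (t + 1)
    have := hcn (t + 1)
    omega
  · obtain ⟨t, rfl⟩ : v ∈ range w := hrange ▸ mem_iUnion_of_mem i hv
    obtain ⟨hdiv, hmod⟩ : (n * t + i) / n = t ∧ (n * t + i) % n = (i : ℕ) :=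
      (Nat.div_mod_unique hn).2 ⟨Nat.add_comm _ _, i.is_lt⟩
    refine ⟨n * t + i, hmod, ?_⟩
    simp only [hdiv, hmod]
    rw [hg t, hc_unique hv]

theorem exists_superset_inter_eq_singleton {α κ : Type*} {I : κ → Set α}
    (hI : Pairwise (Disjoint on I)) (hne : ∀ j, (I j).Nonempty) {J : Set κ} {A : Set α}
    (hA : A ⊆ ⋃ j ∈ J, I j) (hsub : ∀ j ∈ J, (A ∩ I j).Subsingleton) :
    ∃ B, A ⊆ B ∧ B ⊆ ⋃ j ∈ J, I j ∧ ∀ j ∈ J, ∃ a, B ∩ I j = {a} := by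
  have hpoint (j : κ) : ∃ a ∈ I j, (A ∩ I j).Nonempty → a ∈ A := by
    by_cases h : (A ∩ I j).Nonempty
    · exact ⟨h.some, h.some_mem.2, fun _ => h.some_mem.1⟩
    · exact ⟨(hne j).some, (hne j).some_mem, fun h' => absurd h' h⟩
  choose p hpI hpA using hpoint
  refine ⟨p '' J, fun a ha => ?_, ?_, fun j hj => ⟨p j, ?_⟩⟩
  · obtain ⟨j, hj, haj⟩ := mem_iUnion₂.1 (hA ha)
    exact ⟨j, hj, hsub j hj ⟨hpA j ⟨a, ha, haj⟩, hpI j⟩ ⟨ha, haj⟩⟩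
  · rintro _ ⟨j, hj, rfl⟩
    exact mem_biUnion hj (hpI j)
  · refine eq_singleton_iff_unique_mem.2 ⟨⟨mem_image_of_mem p hj, hpI j⟩, ?_⟩
    rintro _ ⟨⟨k, -, rfl⟩, hk⟩
    exact congrArg p (hI.eq (not_disjoint_iff.2 ⟨p k, hpI k, hk⟩))

end Combinatorics

section Blocks

theorem eq_of_succ_mem_Ioc {l : ℕ → ℕ} (hl : StrictMono l) {j k : ℕ}
    (h : l k + 1 ∈ Ioc (l j) (l (j + 1))) : k = j :=
  le_antisymm (Nat.lt_succ_iff.1 (hl.lt_iff_lt.1 h.2)) (hl.le_iff_le.1 (Nat.lt_succ_iff.1 h.1))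

variable {m : ℕ → ℕ}

theorem exists_forall_lt_iff_le (hm : Monotone m) (hlim : Tendsto m atTop atTop) :
    ∃ f : ℕ → ℕ, Tendsto f atTop atTop ∧ ∀ x l, x < m l ↔ f x ≤ l := by
  classical
  have hex (x : ℕ) : ∃ l, x < m l := (hlim.eventually_gt_atTop x).exists
  have hfind (x l : ℕ) : x < m l ↔ Nat.find (hex x) ≤ l :=
    ⟨Nat.find_min' (hex x), fun h => (Nat.find_spec (hex x)).trans_le (hm h)⟩
  refine ⟨fun x => Nat.find (hex x), tendsto_atTop.2 fun b => ?_, hfind⟩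
  filter_upwards [eventually_ge_atTop (m b)] with x hx
  exact le_of_not_ge fun h => hx.not_gt ((hfind x b).2 h)

theorem exists_seq_subset_iUnion_Ico_subsingleton (d : ℕ) {n : ℕ} (hn : 0 < n)
    {D : Fin n → Ultrafilter ℕ} (hQ : ∀ i, IsQPoint (D i)) (hRK : PairwiseNotRKEquiv D)
    (hm : Monotone m) (hlim : Tendsto m atTop atTop) :
    ∃ l : ℕ → ℕ, (∀ j, l j + d < l (j + 1)) ∧ ∃ Z : Fin n → Set ℕ, (∀ i, Z i ∈ D i) ∧
      (∀ i, Z i ⊆ ⋃ j ∈ {j : ℕ | j % n = (i : ℕ)}, Ico (m (l j)) (m (l (j + 1)))) ∧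
      ∀ i j, (Z i ∩ Ico (m (l j)) (m (l (j + 1)))).Subsingleton := by
  obtain ⟨f, hf, hfm⟩ := exists_forall_lt_iff_le hm hlim
  have hmem_Ico {x a b : ℕ} : x ∈ Ico (m a) (m b) ↔ f x ∈ Ioc a b := by
    rw [mem_Ico, mem_Ioc, ← not_lt, hfm, hfm, not_le]
  obtain ⟨Z, hZD, hZlarge, hZsep⟩ := exists_mem_forall_le_dist hQ hRK hf ((d + 1) * n)
    (Nat.succ_pos (2 * ((d + 1) * n)))
  have hZinf : (⋃ i, f '' Z i).Infinite :=
    ((hQ ⟨0, hn⟩).infinite_image hf (hZD _)).mono (subset_iUnion (fun i => f '' Z i) ⟨0, hn⟩)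
  obtain ⟨l, hgap, hl⟩ := exists_spaced_seq_of_separated (d := d + 1) hZinf
    (fun i => forall_mem_image.2 (hZlarge i))
    (fun i j => forall_mem_image.2 fun x hx => forall_mem_image.2 fun y hy hne =>
      hZsep i j x hx y hy fun h => hne (congrArg (Prod.map id f) h))
  have hlmono : StrictMono l := strictMono_nat_of_lt_succ fun j =>
    (Nat.lt_add_of_pos_right d.succ_pos).trans_le (hgap j)
  have hindex {i j x} (hx : x ∈ Z i) (hxj : x ∈ Ico (m (l j)) (m (l (j + 1)))) :
      f x = l j + 1 := by
    obtain ⟨k, -, hk⟩ := hl i (f x) (mem_image_of_mem f hx)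
    have hkj : k = j := eq_of_succ_mem_Ioc hlmono (hk ▸ hmem_Ico.1 hxj)
    rw [hk, hkj]
  refine ⟨l, hgap, Z, hZD, fun i x hx => ?_, fun i j x hx y hy => ?_⟩
  · obtain ⟨j, hj, hfx⟩ := hl i (f x) (mem_image_of_mem f hx)
    refine mem_biUnion (show j ∈ {j | j % n = (i : ℕ)} from hj) (hmem_Ico.2 ?_)
    exact hfx ▸ ⟨Nat.lt_succ_self _, hlmono j.lt_succ_self⟩
  · by_contra hne
    have hdist := hZsep i i x hx.1 y hy.1 fun h => hne (congrArg Prod.snd h)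
    rw [hindex hx.1 hx.2, hindex hy.1 hy.2, Nat.dist_self] at hdist
    exact Nat.not_succ_le_zero _ hdist

end Blocks

theorem stmt0_general (d n : ℕ) (hn : 0 < n) (D : Fin n → Ultrafilter ℕ)
    (hQ : ∀ i : Fin n, IsQPoint (D i)) (hRK : PairwiseNotRKEquiv D)
    (m : ℕ → ℕ) (hm : StrictMono m) :
    ∃ l : ℕ → ℕ, StrictMono l ∧
      ∃ Z : Fin n → Set ℕ,
        (∀ i : Fin n, Z i ∈ D i) ∧
        (∀ j : ℕ, l j + d < l (j + 1)) ∧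
        (∀ i : Fin n,
          Z i ⊆ ⋃ j ∈ {j : ℕ | j % n = (i : ℕ)}, Ico (m (l j)) (m (l (j + 1)))) ∧
        (∀ i : Fin n, ∀ j : ℕ, j % n = (i : ℕ) →
          ∃ a : ℕ, Z i ∩ Ico (m (l j)) (m (l (j + 1))) = {a}) := by
  obtain ⟨l, hgap, A, hAD, hA, hAsub⟩ :=
    exists_seq_subset_iUnion_Ico_subsingleton d hn hQ hRK hm.monotone hm.tendsto_atTop
  have hl : StrictMono l := strictMono_nat_of_lt_succ fun j =>
    (Nat.le_add_right _ _).trans_lt (hgap j)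
  have hml : StrictMono (m ∘ l) := hm.comp hl
  choose Z hAZ hZ hsingle using fun i => exists_superset_inter_eq_singleton
    hml.monotone.pairwise_disjoint_on_Ico_succ
    (fun j => nonempty_Ico.2 (hml j.lt_succ_self)) (hA i) fun j _ => hAsub i j
  exact ⟨l, hl, Z, fun i => mem_of_superset (hAD i) (hAZ i), hgap, hZ, hsingle⟩

/-- Lemma 1.2: given Ramsey ultrafilters `D 0, …, D (n-1)`, pairwise not RK-equivalent,
and a strictly increasing sequence `m`, there are a strictly increasing sequence of
indices `l` and sets `Z i ∈ D i` such that consecutive indices differ by at least 2,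
`Z i` is contained in the union of the intervals `[m (l j), m (l (j+1)))` for
`j ≡ i (mod n)`, and `Z i` meets each such interval in exactly one point. -/
theorem stmt0 (n : ℕ) (hn : 0 < n) (D : Fin n → Ultrafilter ℕ)
    (hRam : ∀ i : Fin n, IsRamseyUF (D i)) (hRK : PairwiseNotRKEquiv D)
    (m : ℕ → ℕ) (hm : StrictMono m) :
    ∃ l : ℕ → ℕ, StrictMono l ∧
      ∃ Z : Fin n → Set ℕ,
        (∀ i : Fin n, Z i ∈ D i) ∧
        (∀ j : ℕ, l j + 2 ≤ l (j + 1)) ∧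
        (∀ i : Fin n,
          Z i ⊆ ⋃ j ∈ {j : ℕ | j % n = (i : ℕ)}, Set.Ico (m (l j)) (m (l (j + 1)))) ∧
        (∀ i : Fin n, ∀ j : ℕ, j % n = (i : ℕ) →
          ∃ a : ℕ, Z i ∩ Set.Ico (m (l j)) (m (l (j + 1))) = {a}) :=
  stmt0_general 1 n hn D (fun i => (hRam i).isQPoint) hRK m hm
end

section
/- For every 0 < n < ω there exists a base tree for P_n of height 𝔥(n): a set T ⊆ P_n together with levels ⟨T_α : α < 𝔥(n)⟩ such that T is dense in P_n; for every x ∈ T the set pred_T(x) is well-ordered by the reverse of ≤; T_α is the nonempty set of all x ∈ T for which pred_T(x) has order type α, and T = ⋃_{α<𝔥(n)} T_α; every level T_α is a maximal antichain in P_n; and every element of T has 2^ℵ₀-many immediate successors in T. -/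
/-- `Pn n` is the poset of `n`-tuples of infinite subsets of ℕ, representing
`(P(ω)/fin)ⁿ`. -/
def Pn (n : ℕ) := {x : Fin n → Set ℕ // ∀ i : Fin n, (x i).Infinite}

/-- The order of `Pn n`: `x ≤ y` iff `x i ⊆* y i` (almost inclusion) for all `i`. -/
def PnLE {n : ℕ} (x y : Pn n) : Prop := ∀ i : Fin n, (x.1 i \ y.1 i).Finite

/-- Compatibility in `Pn n`: `x i ∩ y i` is infinite for every `i`. -/
def PnCompat {n : ℕ} (x y : Pn n) : Prop := ∀ i : Fin n, (x.1 i ∩ y.1 i).Infinite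

/-- `D ⊆ Pn n` is open: downward closed under `≤`. -/
def PnOpen {n : ℕ} (D : Set (Pn n)) : Prop :=
  ∀ x y : Pn n, PnLE x y → y ∈ D → x ∈ D

/-- `D ⊆ Pn n` is dense: every element has a `≤`-extension in `D`. -/
def PnDense {n : ℕ} (D : Set (Pn n)) : Prop := ∀ x : Pn n, ∃ y ∈ D, PnLE y x

/-- The distributivity number `𝔥(n)`: the least cardinality of a family of open dense
subsets of `Pn n` whose intersection is not dense. -/
noncomputable def hdist (n : ℕ) : Cardinal :=
  sInf {κ : Cardinal | ∃ F : Set (Set (Pn n)),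
    Cardinal.mk F = κ ∧ (∀ D ∈ F, PnOpen D ∧ PnDense D) ∧ ¬ PnDense (⋂₀ F)}

/-- The set of strict predecessors of `x` in `T`. -/
def predT {n : ℕ} (T : Set (Pn n)) (x : Pn n) : Set (Pn n) :=
  {y ∈ T | PnLE x y ∧ ¬ PnLE y x}

/-- The reverse of `≤` (as a strict relation) on the predecessors of `x` in `T`. -/
def predRel {n : ℕ} (T : Set (Pn n)) (x : Pn n) :
    predT T x → predT T x → Prop :=
  fun a b => PnLE b.1 a.1 ∧ ¬ PnLE a.1 b.1

/-- `T` with levels `L` is a base tree for `Pn n` of height `𝔥(n)`: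
`T` is dense; the predecessors of each node are well-ordered by the reverse of `≤`;
`L α` (for `α < 𝔥(n)`) is the set of nodes whose predecessors have order type `α`;
each level is nonempty, the levels cover `T`, each level is a maximal antichain in
`Pn n`, and every node has `2^ℵ₀`-many immediate successors in `T`. -/
structure IsBaseTree (n : ℕ) (T : Set (Pn n)) (L : Ordinal → Set (Pn n)) : Prop where
  dense : PnDense T
  wellOrdered : ∀ x (hx : x ∈ T), IsWellOrder (predT T x) (predRel T x)
  level_eq : ∀ α < (hdist n).ord, ∀ x : Pn n,
    x ∈ L α ↔ ∃ hx : x ∈ T, @Ordinal.type _ (predRel T x) (wellOrdered x hx) = α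
  level_nonempty : ∀ α < (hdist n).ord, (L α).Nonempty
  level_covers : ∀ x ∈ T, ∃ α < (hdist n).ord, x ∈ L α
  level_antichain : ∀ α < (hdist n).ord, ∀ x ∈ L α, ∀ y ∈ L α, x ≠ y → ¬ PnCompat x y
  level_maximal : ∀ α < (hdist n).ord, ∀ z : Pn n, ∃ x ∈ L α, PnCompat z x
  succ_card : ∀ y ∈ T,
    Cardinal.mk {x : Pn n // x ∈ T ∧ predT T x = predT T y ∪ {y}} = Cardinal.continuum

/-
Fewer than `𝔥` maximal antichains have a common refinement inside any given open dense set, so a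
recursion along `𝔥` produces a refining matrix of maximal antichains. Homogeneity supplies a family
of `𝔥` open dense sets with empty intersection; guiding the rows by this family, no condition lies
below an element of every row. Hence every condition `x` is split by some row and, iterating along
a binary tree, meets continuum many elements of one row. As there are at most continuum many
conditions, each such `x` can be assigned an element of that row of its own, below which the next
row is shrunk under `x`; this makes the union of the rows dense.
-/

open Cardinal Set

universe u

theorem exists_injective_forall_mem_of_mk_le {X Y : Type u} {A : X → Set Y}
    (hA : ∀ x, #X ≤ #(A x)) : ∃ f : X → Y, Function.Injective f ∧ ∀ x, f x ∈ A x := by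
  obtain ⟨_, _, hord⟩ := exists_ord_eq_type_lt X
  have exists_fresh (x : X) (g : ∀ y, y < x → Y) : ∃ a ∈ A x, ∀ y (h : y < x), g y h ≠ a := by
    have hlt : #(range fun y : {y // y < x} ↦ g y y.2) < #(A x) := by
      refine (mk_range_le.trans_lt ?_).trans_le (hA x)
      rw [← Ordinal.card_typein]
      exact card_typein_lt x hord
    obtain ⟨a, ha, hg⟩ := not_subset.1 fun h ↦ (mk_le_mk_of_subset h).not_gt hlt
    exact ⟨a, ha, fun y h hy ↦ hg ⟨⟨y, h⟩, hy⟩⟩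
  choose F hFmem hFne using exists_fresh
  let f : X → Y := wellFounded_lt.fix F
  have hf (x : X) : f x = F x fun y _ ↦ f y := wellFounded_lt.fix_eq F x
  refine ⟨f, .of_lt_imp_ne fun y x hyx ↦ ?_, fun x ↦ hf x ▸ hFmem _ _⟩
  rw [hf x]
  exact hFne x (fun y _ ↦ f y) y hyx

theorem exists_ordinal_enumeration {X : Type u} {S : Set X} (hS : S.Nonempty) :
    ∃ f : Ordinal.{u} → X, (∀ α, f α ∈ S) ∧ S ⊆ f '' Iio (#S).ord := by
  have := hS.to_subtype
  obtain ⟨r, _, hr⟩ := exists_ord_eq S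
  refine ⟨fun α ↦ (Function.invFun (Ordinal.typein r) α : S), fun α ↦ Subtype.coe_prop _,
    fun x hx ↦ ⟨Ordinal.typein r ⟨x, hx⟩, hr ▸ Ordinal.typein_lt_type r _, ?_⟩⟩
  exact congrArg Subtype.val (Function.leftInverse_invFun (Ordinal.typein_injective r) ⟨x, hx⟩)

theorem continuum_le_mk_of_injective {X : Type u} {f : (ℕ → Bool) → X}
    (hf : Function.Injective f) : 𝔠 ≤ #X := by
  simpa using lift_mk_le_lift_mk_of_injective hf

section Forcing

variable {P : Type u} [Preorder P]

/-- Compatibility of forcing conditions: `x` and `y` have a common lower bound. Sets of pairwise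
incompatible elements are Mathlib's `IsStrongAntichain (· ≥ ·)`. -/
def Compatible (x y : P) : Prop := ∃ z, z ≤ x ∧ z ≤ y

namespace Compatible

variable {x y x' y' : P}

theorem symm (h : Compatible x y) : Compatible y x :=
  let ⟨z, hx, hy⟩ := h
  ⟨z, hy, hx⟩

theorem mono (h : Compatible x y) (hx : x ≤ x') (hy : y ≤ y') : Compatible x' y' :=
  let ⟨z, hzx, hzy⟩ := h
  ⟨z, hzx.trans hx, hzy.trans hy⟩

theorem of_le (h : x ≤ y) : Compatible x y := ⟨x, le_rfl, h⟩

end Compatible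

theorem isStrongAntichain_iff_eq_of_compatible {S : Set P} :
    IsStrongAntichain (· ≥ ·) S ↔ ∀ x ∈ S, ∀ y ∈ S, Compatible x y → x = y := by
  refine ⟨fun hS x hx y hy ⟨z, hzx, hzy⟩ ↦ hS.eq hx hy hzx hzy, fun h x hx y hy hne z ↦ ?_⟩
  exact not_and_or.1 fun hz ↦ hne (h x hx y hy ⟨z, hz⟩)

/-- A maximal antichain in the sense of forcing: its elements are pairwise incompatible and every
condition is compatible with one of them. -/
structure IsMaximalAntichain (S : Set P) : Prop where
  isStrongAntichain : IsStrongAntichain (· ≥ ·) S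
  exists_compatible : ∀ z, ∃ s ∈ S, Compatible z s

theorem exists_isMaximalAntichain_between {A D : Set P} (hA : IsStrongAntichain (· ≥ ·) A)
    (hAD : A ⊆ D) (hD : IsCoinitial D) : ∃ S, A ⊆ S ∧ S ⊆ D ∧ IsMaximalAntichain S := by
  obtain ⟨S, hAS, hS⟩ := zorn_subset_nonempty {S | S ⊆ D ∧ IsStrongAntichain (· ≥ ·) S}
    (fun c hc hchain _ ↦ ⟨⋃₀ c, ⟨sUnion_subset fun s hs ↦ (hc hs).1,
      (pairwise_sUnion hchain.directedOn).2 fun s hs ↦ (hc hs).2⟩,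
      fun s hs ↦ subset_sUnion_of_mem hs⟩) A ⟨hAD, hA⟩
  refine ⟨S, hAS, hS.prop.1, hS.prop.2, fun z ↦ ?_⟩
  by_contra! hz
  obtain ⟨d, hdD, hdz⟩ := hD z
  have hd (s) (hs : s ∈ S) : ¬ Compatible d s := fun h ↦ hz s hs (h.mono hdz le_rfl)
  have hinsert : IsStrongAntichain (· ≥ ·) (insert d S) :=
    hS.prop.2.insert fun s hs _ w ↦ not_and_or.1 fun hw ↦ hd s hs ⟨w, hw⟩
  have hdS : d ∈ S :=
    hS.le_of_ge ⟨insert_subset hdD hS.prop.1, hinsert⟩ (subset_insert d S) (mem_insert d S)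
  exact hd d hdS (.of_le le_rfl)

namespace IsMaximalAntichain

variable {S : Set P}

theorem eq_of_compatible (hS : IsMaximalAntichain S) {s t : P} (hs : s ∈ S) (ht : t ∈ S)
    (h : Compatible s t) : s = t :=
  isStrongAntichain_iff_eq_of_compatible.1 hS.isStrongAntichain s hs t ht h

theorem isCoinitial_lowerClosure (hS : IsMaximalAntichain S) :
    IsCoinitial (lowerClosure S : Set P) := fun x ↦
  let ⟨s, hs, z, hzx, hzs⟩ := hS.exists_compatible x
  ⟨z, mem_lowerClosure.2 ⟨s, hs, hzs⟩, hzx⟩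

theorem exists_le_compatible {M T : Set P} (hM : IsMaximalAntichain M) (hT : IsMaximalAntichain T)
    (hMT : M ⊆ lowerClosure T) {t : P} (ht : t ∈ T) {x : P} (hxt : Compatible x t) :
    ∃ m ∈ M, m ≤ t ∧ Compatible x m := by
  obtain ⟨z, hzx, hzt⟩ := hxt
  obtain ⟨m, hm, hzm⟩ := hM.exists_compatible z
  obtain ⟨t', ht', hmt'⟩ := hMT hm
  obtain rfl : t = t' := hT.eq_of_compatible ht ht' (hzm.mono hzt hmt')
  exact ⟨m, hm, hmt', hzm.mono hzx le_rfl⟩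

end IsMaximalAntichain

theorem isCoinitial_inter_of_isLowerSet {D E : Set P} (hDl : IsLowerSet D) (hD : IsCoinitial D)
    (hE : IsCoinitial E) : IsCoinitial (D ∩ E) := fun x ↦
  let ⟨y, hy, hyx⟩ := hD x
  let ⟨z, hz, hzy⟩ := hE y
  ⟨z, ⟨hDl hzy hy, hz⟩, hzy.trans hyx⟩

variable (P) in
/-- `P` is σ-closed: every decreasing sequence of conditions has a lower bound. -/
def IsSigmaClosed : Prop := ∀ s : ℕ → P, Antitone s → ∃ z, ∀ k, z ≤ s k

variable (P) in
/-- `P` is separative: a condition not below `t` has an extension incompatible with `t`. -/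
def IsSeparative : Prop := ∀ ⦃x t : P⦄, ¬ x ≤ t → ∃ y ≤ x, ¬ Compatible y t

variable (P) in
/-- Every cone of `P` contains a dense copy of `P`. This homogeneity makes a family of open dense
sets witnessing `distributivityNumber P` available below every condition. -/
def IsDenselySelfSimilar : Prop :=
  ∀ x : P, ∃ φ : P ↪o Iic x, IsCoinitial (range φ)

variable (P) in
/-- Below every condition of `P` there is an antichain of size continuum, the source of the
continuum-fold branching of the base tree. -/
def HasContinuumAntichains : Prop :=
  ∀ x : P, ∃ A ⊆ Iic x, IsStrongAntichain (· ≥ ·) A ∧ 𝔠 ≤ #A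

theorem IsDenselySelfSimilar.hasContinuumAntichains (hP : IsDenselySelfSimilar P)
    {A : Set P} (hA : IsStrongAntichain (· ≥ ·) A) (hAc : 𝔠 ≤ #A) :
    HasContinuumAntichains P := by
  intro x
  obtain ⟨φ, hφ⟩ := hP x
  let ψ : P → P := fun y ↦ φ y
  have ψ_injective : Function.Injective ψ := Subtype.val_injective.comp φ.injective
  have ψ_le {y z : P} (h : ψ y ≤ ψ z) : y ≤ z := φ.le_iff_le.1 h
  refine ⟨ψ '' A, image_subset_iff.2 fun y _ ↦ (φ y).2, ?_, by rwa [mk_image_eq ψ_injective]⟩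
  rw [isStrongAntichain_iff_eq_of_compatible]
  rintro _ ⟨y, hy, rfl⟩ _ ⟨z, hz, rfl⟩ ⟨w, hwy, hwz⟩
  obtain ⟨_, ⟨p, rfl⟩, hp⟩ := hφ ⟨w, hwy.trans (φ y).2⟩
  exact congrArg ψ (hA.eq hy hz (ψ_le (le_trans hp hwy)) (ψ_le (le_trans hp hwz)))

theorem HasContinuumAntichains.exists_not_le (hP : HasContinuumAntichains P) (x y : P) :
    ∃ z ≤ x, ¬ y ≤ z := by
  obtain ⟨A, hAx, hA, hAc⟩ := hP x
  obtain ⟨⟨a, ha⟩, ⟨b, hb⟩, hab⟩ := two_le_iff.1 ((nat_lt_continuum 2).le.trans hAc)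
  by_contra! h
  exact hab (Subtype.ext (hA.eq ha hb (h a (hAx ha)) (h b (hAx hb))))

theorem IsSigmaClosed.isCoinitial_iInter (hP : IsSigmaClosed P) {ι : Type*} [Countable ι]
    {D : ι → Set P} (hD : ∀ i, IsLowerSet (D i) ∧ IsCoinitial (D i)) :
    IsCoinitial (⋂ i, D i) := by
  intro x
  rcases isEmpty_or_nonempty ι with _ | _
  · exact ⟨x, by simp, le_rfl⟩
  obtain ⟨q, hq⟩ := exists_surjective_nat ι
  choose d hd_mem hd_le using fun k ↦ (hD (q k)).2
  let s : ℕ → P := fun k ↦ Nat.rec x (fun k p ↦ d k p) k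
  obtain ⟨z, hz⟩ := hP s (antitone_nat_of_succ_le fun k ↦ hd_le k (s k))
  refine ⟨z, mem_iInter.2 <| hq.forall.2 fun k ↦ ?_, hz 0⟩
  exact (hD (q k)).1 (hz (k + 1)) (hd_mem k (s k))

variable (P) in
/-- The distributivity number `𝔥(P)`: the least size of a family of open dense sets whose
intersection is not dense. -/
noncomputable def distributivityNumber : Cardinal.{u} :=
  sInf {κ | ∃ F : Set (Set P),
    #F = κ ∧ (∀ D ∈ F, IsLowerSet D ∧ IsCoinitial D) ∧ ¬ IsCoinitial (⋂₀ F)}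

theorem isCoinitial_sInter_of_mk_lt {F : Set (Set P)} (hF : #F < distributivityNumber P)
    (hD : ∀ D ∈ F, IsLowerSet D ∧ IsCoinitial D) : IsCoinitial (⋂₀ F) := by
  by_contra h
  exact notMem_of_lt_csInf' hF ⟨F, rfl, hD, h⟩

theorem HasContinuumAntichains.exists_mk_eq_distributivityNumber [Nonempty P]
    (hP : HasContinuumAntichains P) :
    ∃ F : Set (Set P), #F = distributivityNumber P ∧
      (∀ D ∈ F, IsLowerSet D ∧ IsCoinitial D) ∧ ¬ IsCoinitial (⋂₀ F) := by
  refine csInf_mem (s := {κ | ∃ F : Set (Set P), #F = κ ∧ _ ∧ _})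
    ⟨_, {D | IsLowerSet D ∧ IsCoinitial D}, rfl, fun D hD ↦ hD, fun h ↦ ?_⟩
  obtain ⟨y, hy, -⟩ := h (Classical.arbitrary P)
  have avoid_y : IsLowerSet {x | ¬ y ≤ x} ∧ IsCoinitial {x | ¬ y ≤ x} := by
    refine ⟨fun a b hba hya hyb ↦ hya (hyb.trans hba), fun x ↦ ?_⟩
    obtain ⟨z, hzx, hyz⟩ := hP.exists_not_le x y
    exact ⟨z, hyz, hzx⟩
  exact hy _ avoid_y le_rfl

theorem IsDenselySelfSimilar.exists_isCoinitial_forall_exists_notMem [Nonempty P]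
    (hself : IsDenselySelfSimilar P) (hanti : HasContinuumAntichains P) :
    ∃ E : Ordinal.{u} → Set P, (∀ α, IsLowerSet (E α) ∧ IsCoinitial (E α)) ∧
      ∀ x, ∃ α < (distributivityNumber P).ord, x ∉ E α := by
  obtain ⟨F, hFcard, hF, hFn⟩ := hanti.exists_mk_eq_distributivityNumber
  have hF_nonempty : F.Nonempty := by
    rw [nonempty_iff_ne_empty]
    rintro rfl
    exact hFn fun x ↦ ⟨x, by simp, le_rfl⟩
  obtain ⟨f, hf_mem, hf_surj⟩ := exists_ordinal_enumeration hF_nonempty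
  obtain ⟨x, hx⟩ : ∃ x, ∀ y ∈ ⋂₀ F, ¬ y ≤ x := by simpa [IsCoinitial] using hFn
  obtain ⟨φ, hφ⟩ := hself x
  refine ⟨fun α ↦ {y | (φ y : P) ∈ f α}, fun α ↦ ⟨fun y z hzy hy ↦ ?_, fun y ↦ ?_⟩, fun y ↦ ?_⟩
  · exact (hF _ (hf_mem α)).1 (φ.monotone hzy) hy
  · obtain ⟨z, hz, hzy⟩ := (hF _ (hf_mem α)).2 (φ y)
    obtain ⟨_, ⟨p, rfl⟩, hp⟩ := hφ ⟨z, hzy.trans (φ y).2⟩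
    exact ⟨p, (hF _ (hf_mem α)).1 hp hz, φ.le_iff_le.1 (hp.trans hzy)⟩
  · obtain ⟨D, hD, hyD⟩ : ∃ D ∈ F, (φ y : P) ∉ D := by
      by_contra! h
      exact hx (φ y) h (φ y).2
    obtain ⟨α, hα, rfl⟩ := hf_surj hD
    exact ⟨α, hFcard ▸ hα, hyD⟩

/-- `S` refines `T`, splits every element of `T` into continuum many pieces, and has an element
below every condition that meets continuum many elements of `T`. -/
structure IsBaseRefinement (S T : Set P) : Prop where
  subset_lowerClosure : S ⊆ lowerClosure T
  continuum_le_mk_inter_Iic : ∀ t ∈ T, 𝔠 ≤ #↥(S ∩ Iic t)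
  exists_le : ∀ x, 𝔠 ≤ #{t ∈ T | Compatible x t} → ∃ s ∈ S, s ≤ x

theorem exists_shrinking_of_mk_le_continuum (hcard : #P ≤ 𝔠) (M : Set P) :
    ∃ u : P → P, (∀ m, u m ≤ m) ∧
      ∀ x, 𝔠 ≤ #{m ∈ M | Compatible x m} → ∃ m ∈ M, u m ≤ x := by
  let X := {x : P // 𝔠 ≤ #{m ∈ M | Compatible x m}}
  obtain ⟨f, f_injective, hf⟩ := exists_injective_forall_mem_of_mk_le
    (A := fun x : X ↦ {m ∈ M | Compatible x.1 m})
    fun x ↦ ((mk_subtype_le _).trans hcard).trans x.2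
  have exists_shrink (m : P) : ∃ p ≤ m, ∀ x : X, f x = m → p ≤ x := by
    by_cases h : ∃ x, f x = m
    · obtain ⟨x, rfl⟩ := h
      obtain ⟨z, hzx, hzm⟩ := (hf x).2
      exact ⟨z, hzm, fun y hy ↦ f_injective hy ▸ hzx⟩
    · exact ⟨m, le_rfl, fun x hx ↦ (h ⟨x, hx⟩).elim⟩
  choose u hu hux using exists_shrink
  exact ⟨u, hu, fun x hx ↦ ⟨f ⟨x, hx⟩, (hf ⟨x, hx⟩).1, hux _ _ rfl⟩⟩

theorem IsMaximalAntichain.exists_isBaseRefinement {M : Set P} (hM : IsMaximalAntichain M)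
    (hcard : #P ≤ 𝔠) (hanti : HasContinuumAntichains P) :
    ∃ S, IsMaximalAntichain S ∧ IsBaseRefinement S M := by
  obtain ⟨u, hu, hux⟩ := exists_shrinking_of_mk_le_continuum hcard M
  choose A hAu hA hAc using fun m ↦ hanti (u m)
  have hAm {m a : P} (ha : a ∈ A m) : a ≤ m := (hAu m ha).trans (hu m)
  have antichain : IsStrongAntichain (· ≥ ·) (⋃ m ∈ M, A m) := by
    rw [isStrongAntichain_iff_eq_of_compatible]
    intro a ha b hb hab
    obtain ⟨m, hm, ham⟩ := mem_iUnion₂.1 ha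
    obtain ⟨m', hm', hbm'⟩ := mem_iUnion₂.1 hb
    obtain rfl := hM.eq_of_compatible hm hm' (hab.mono (hAm ham) (hAm hbm'))
    exact isStrongAntichain_iff_eq_of_compatible.1 (hA m) a ham b hbm' hab
  obtain ⟨S, hAS, hSM, hS⟩ := exists_isMaximalAntichain_between antichain
    (iUnion₂_subset fun m hm a ha ↦ mem_lowerClosure.2 ⟨m, hm, hAm ha⟩)
    hM.isCoinitial_lowerClosure
  have hAS {m : P} (hm : m ∈ M) : A m ⊆ S := (subset_biUnion_of_mem hm).trans hAS
  refine ⟨S, hS, hSM, fun m hm ↦ ?_, fun x hx ↦ ?_⟩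
  · exact (hAc m).trans (mk_le_mk_of_subset fun a ha ↦ ⟨hAS hm ha, hAm ha⟩)
  · obtain ⟨m, hm, hmx⟩ := hux x hx
    obtain ⟨a, ha⟩ := mk_ne_zero_iff.1 (continuum_pos.trans_le (hAc m)).ne'
    exact ⟨a, hAS hm ha, (hAu m ha).trans hmx⟩

theorem IsBaseRefinement.trans_subset_lowerClosure {S M T : Set P} (hSM : IsBaseRefinement S M)
    (hM : IsMaximalAntichain M) (hT : IsMaximalAntichain T) (hMT : M ⊆ lowerClosure T) :
    IsBaseRefinement S T where
  subset_lowerClosure :=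
    hSM.subset_lowerClosure.trans (lowerClosure_min hMT (lowerClosure T).lower)
  continuum_le_mk_inter_Iic t ht := by
    obtain ⟨m, hm, hmt, -⟩ := hM.exists_le_compatible hT hMT ht (.of_le (le_refl t))
    refine (hSM.continuum_le_mk_inter_Iic m hm).trans (mk_le_mk_of_subset ?_)
    exact inter_subset_inter_right S (Iic_subset_Iic.2 hmt)
  exists_le x hx := by
    choose F hFM hFle hFx using fun t : {t ∈ T | Compatible x t} ↦
      hM.exists_le_compatible hT hMT t.2.1 t.2.2
    refine hSM.exists_le x (hx.trans ?_)
    refine mk_le_of_injective (f := fun t ↦ ⟨F t, hFM t, hFx t⟩) fun t t' htt' ↦ ?_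
    have hF : F t = F t' := congrArg Subtype.val htt'
    exact Subtype.ext (hT.eq_of_compatible t.2.1 t'.2.1 ⟨F t, hFle t, hF ▸ hFle t'⟩)

theorem exists_common_isBaseRefinement (hcard : #P ≤ 𝔠) (hanti : HasContinuumAntichains P)
    {𝓣 : Set (Set P)} (h𝓣card : #𝓣 < distributivityNumber P)
    (h𝓣 : ∀ T ∈ 𝓣, IsMaximalAntichain T) {D : Set P} (hDl : IsLowerSet D) (hD : IsCoinitial D) :
    ∃ S ⊆ D, IsMaximalAntichain S ∧ ∀ T ∈ 𝓣, IsBaseRefinement S T := by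
  let R : Set P := ⋂₀ ((fun T ↦ (lowerClosure T : Set P)) '' 𝓣)
  have hRl : IsLowerSet R :=
    isLowerSet_sInter (forall_mem_image.2 fun T _ ↦ (lowerClosure T).lower)
  have hR : IsCoinitial R := isCoinitial_sInter_of_mk_lt (mk_image_le.trans_lt h𝓣card) <|
    forall_mem_image.2 fun T hT ↦ ⟨(lowerClosure T).lower, (h𝓣 T hT).isCoinitial_lowerClosure⟩
  obtain ⟨M, -, hMD, hM⟩ := exists_isMaximalAntichain_between
    (subsingleton_empty.isStrongAntichain _) (empty_subset _)
    (isCoinitial_inter_of_isLowerSet hDl hD hR)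
  obtain ⟨S, hS, hSM⟩ := hM.exists_isBaseRefinement hcard hanti
  have hSD : S ⊆ D ∩ R :=
    hSM.subset_lowerClosure.trans (lowerClosure_min hMD (hDl.inter hRl))
  refine ⟨S, fun s hs ↦ (hSD hs).1, hS, fun T hT ↦ ?_⟩
  exact hSM.trans_subset_lowerClosure hM (h𝓣 T hT) fun m hm ↦
    (hMD hm).2 _ (mem_image_of_mem _ hT)

/-- A base matrix of height `o`, after Balcar, Pelant and Simon: maximal antichains `L α`, each
refining all the previous ones as in `IsBaseRefinement`, that no single condition refines
simultaneously. Only the rows `L α` with `α < o` matter. -/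
structure IsBaseMatrix (o : Ordinal.{u}) (L : Ordinal.{u} → Set P) : Prop where
  isMaximalAntichain : ∀ α < o, IsMaximalAntichain (L α)
  isBaseRefinement : ∀ α < o, ∀ β < α, IsBaseRefinement (L α) (L β)
  exists_notMem : ∀ x, ∃ α < o, x ∉ lowerClosure (L α)

theorem exists_isBaseMatrix [Nonempty P] (hcard : #P ≤ 𝔠) (hself : IsDenselySelfSimilar P)
    (hanti : HasContinuumAntichains P) :
    ∃ L : Ordinal.{u} → Set P, IsBaseMatrix (distributivityNumber P).ord L := by
  obtain ⟨E, hE, hE_notMem⟩ := hself.exists_isCoinitial_forall_exists_notMem hanti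
  choose! next next_subset next_max next_refines using
    fun (𝓣 : Set (Set P)) (α : Ordinal.{u}) (h𝓣card : #𝓣 < distributivityNumber P)
      (h𝓣 : ∀ T ∈ 𝓣, IsMaximalAntichain T) ↦
    exists_common_isBaseRefinement hcard hanti h𝓣card h𝓣 (hE α).1 (hE α).2
  let L : Ordinal.{u} → Set P :=
    wellFounded_lt.fix fun α prev ↦ next (range fun β : Iio α ↦ prev β β.2) α
  have L_eq (α) : L α = next (L '' Iio α) α := by
    rw [image_eq_range]
    exact wellFounded_lt.fix_eq _ α
  have mk_previous_lt {α} (hα : α < (distributivityNumber P).ord) :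
      #(L '' Iio α) < distributivityNumber P := by
    rw [← lift_lt.{u, u + 1}]
    refine mk_image_le_lift.trans_lt ?_
    rw [mk_Iio_ordinal, lift_lift, lift_lt]
    exact lt_ord.1 hα
  have hmax (α) (hα : α < (distributivityNumber P).ord) : IsMaximalAntichain (L α) := by
    induction α using WellFoundedLT.induction with
    | ind α ih =>
      rw [L_eq]
      exact next_max _ _ (mk_previous_lt hα) (forall_mem_image.2 fun β hβ ↦ ih β hβ (hβ.trans hα))
  have previous_max {α} (hα : α < (distributivityNumber P).ord) :
      ∀ T ∈ L '' Iio α, IsMaximalAntichain T :=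
    forall_mem_image.2 fun β hβ ↦ hmax β (lt_trans hβ hα)
  refine ⟨L, hmax, fun α hα β hβ ↦ ?_, fun x ↦ ?_⟩
  · rw [L_eq α]
    exact next_refines _ _ (mk_previous_lt hα) (previous_max hα) _ (mem_image_of_mem L hβ)
  · obtain ⟨α, hα, hxα⟩ := hE_notMem x
    have L_subset : L α ⊆ E α := by
      rw [L_eq]
      exact next_subset _ _ (mk_previous_lt hα) (previous_max hα)
    exact ⟨α, hα, fun hx ↦ hxα (lowerClosure_min L_subset (hE α).1 hx)⟩

namespace IsBaseMatrix

variable {o α β : Ordinal.{u}} {L : Ordinal.{u} → Set P} {s t : P}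

theorem lowerClosure_anti (hL : IsBaseMatrix o L) (hβα : β ≤ α) (hα : α < o) :
    lowerClosure (L α) ≤ lowerClosure (L β) := by
  rcases hβα.eq_or_lt with rfl | hβα
  · exact le_rfl
  · exact lowerClosure_min (hL.isBaseRefinement α hα β hβα).subset_lowerClosure
      (lowerClosure (L β)).lower

theorem exists_ge (hL : IsBaseMatrix o L) (hβα : β ≤ α) (hα : α < o) (hs : s ∈ L α) :
    ∃ t ∈ L β, s ≤ t :=
  mem_lowerClosure.1 (hL.lowerClosure_anti hβα hα (subset_lowerClosure hs))

theorem le_of_compatible (hL : IsBaseMatrix o L) (hβα : β ≤ α) (hα : α < o) (hs : s ∈ L α)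
    (ht : t ∈ L β) (h : Compatible s t) : s ≤ t := by
  obtain ⟨t', ht', hst'⟩ := hL.exists_ge hβα hα hs
  obtain rfl : t = t' := (hL.isMaximalAntichain β (hβα.trans_lt hα)).eq_of_compatible ht ht'
    (h.symm.mono le_rfl hst')
  exact hst'

theorem not_ge_of_lt (hL : IsBaseMatrix o L) (hβα : β < α) (hα : α < o) (hs : s ∈ L α)
    (ht : t ∈ L β) : ¬ t ≤ s := by
  intro hts
  have two_le : 2 ≤ #↥(L α ∩ Iic t) := (nat_lt_continuum 2).le.trans
    ((hL.isBaseRefinement α hα β hβα).continuum_le_mk_inter_Iic t ht)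
  obtain ⟨p, q, hpq⟩ := two_le_iff.1 two_le
  have eq_s (r : ↥(L α ∩ Iic t)) : r.1 = s :=
    (hL.isMaximalAntichain α hα).eq_of_compatible r.2.1 hs (.of_le (r.2.2.trans hts))
  exact hpq (Subtype.ext ((eq_s p).trans (eq_s q).symm))

theorem lt_iff_of_compatible (hL : IsBaseMatrix o L) (hα : α < o) (hβ : β < o) (hs : s ∈ L α)
    (ht : t ∈ L β) (h : Compatible s t) : s < t ↔ β < α := by
  refine ⟨fun hst ↦ ?_, fun hβα ↦ ?_⟩
  · by_contra! hαβ
    exact hst.not_ge (hL.le_of_compatible hαβ hβ ht hs h.symm)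
  · exact lt_of_le_not_ge (hL.le_of_compatible hβα.le hα hs ht h) (hL.not_ge_of_lt hβα hα hs ht)

theorem exists_forall_lt [Nonempty P] (hL : IsBaseMatrix o L) (hclosed : IsSigmaClosed P)
    {ι : Type*} [Countable ι] {a : ι → Ordinal.{u}} (ha : ∀ i, a i < o) :
    ∃ β < o, ∀ i, a i < β := by
  by_contra! h
  obtain ⟨x, hx, -⟩ := hclosed.isCoinitial_iInter (D := fun i ↦ lowerClosure (L (a i)))
    (fun i ↦ ⟨(lowerClosure (L (a i))).lower,
      (hL.isMaximalAntichain _ (ha i)).isCoinitial_lowerClosure⟩) (Classical.arbitrary P)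
  obtain ⟨α, hα, hxα⟩ := hL.exists_notMem x
  obtain ⟨i, hi⟩ := h α hα
  exact hxα (hL.lowerClosure_anti hi (ha i) (mem_iInter.1 hx i))

theorem succ_lt [Nonempty P] (hL : IsBaseMatrix o L) (hclosed : IsSigmaClosed P) (hα : α < o) :
    Order.succ α < o :=
  let ⟨_, hβ, hαβ⟩ := hL.exists_forall_lt hclosed (a := fun _ : Unit ↦ α) fun _ ↦ hα
  (Order.succ_le_of_lt (hαβ ())).trans_lt hβ

theorem exists_split (hL : IsBaseMatrix o L) (hsep : IsSeparative P) (x : P) :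
    ∃ α < o, ∃ t y : Bool → P, Function.Injective t ∧
      ∀ b, t b ∈ L α ∧ y b ≤ x ∧ y b ≤ t b := by
  obtain ⟨α, hα, hxα⟩ := hL.exists_notMem x
  obtain ⟨t, ht, y, hyx, hyt⟩ := (hL.isMaximalAntichain α hα).exists_compatible x
  obtain ⟨z, hzx, hzt⟩ := hsep fun hxt ↦ hxα (mem_lowerClosure.2 ⟨t, ht, hxt⟩)
  obtain ⟨t', ht', y', hy'z, hy't'⟩ := (hL.isMaximalAntichain α hα).exists_compatible z
  have hne : t' ≠ t := by
    rintro rfl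
    exact hzt ⟨y', hy'z, hy't'⟩
  refine ⟨α, hα, fun b ↦ bif b then t else t', fun b ↦ bif b then y else y', ?_, ?_⟩
  · exact Bool.injective_iff.2 hne
  · exact Bool.forall_bool.2 ⟨⟨ht', hy'z.trans hzx, hy't'⟩, ht, hyx, hyt⟩

/- Splitting `x` along a binary tree, all of whose splittings happen before some row `β < o`, gives
continuum many branches; by σ-closedness each of them meets row `β`, and distinct branches meet it
in distinct elements. -/
theorem exists_continuum_le_mk_compatible (hL : IsBaseMatrix o L) (hsep : IsSeparative P)
    (hclosed : IsSigmaClosed P) (x : P) : ∃ β < o, 𝔠 ≤ #{t ∈ L β | Compatible x t} := by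
  have : Nonempty P := ⟨x⟩
  choose α hα t y t_injective hty using hL.exists_split hsep
  let node : List Bool → P := List.foldr (fun b p ↦ y p b) x
  obtain ⟨β, hβ, hαβ⟩ := hL.exists_forall_lt hclosed fun l ↦ hα (node l)
  have exists_lowerBound (a : ℕ → Bool) : ∃ z, ∀ k, z ≤ node (PiNat.res a k) :=
    hclosed _ (antitone_nat_of_succ_le fun k ↦ (hty _ _).2.1)
  choose z hz using exists_lowerBound
  choose r hr hzr using fun a ↦ (hL.isMaximalAntichain β hβ).exists_compatible (z a)
  have r_le (a : ℕ → Bool) (k : ℕ) : r a ≤ t (node (PiNat.res a k)) (a k) :=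
    hL.le_of_compatible (hαβ _).le hβ (hr a) (hty _ _).1
      ((hzr a).symm.mono le_rfl ((hz a (k + 1)).trans (hty _ _).2.2))
  refine ⟨β, hβ, continuum_le_mk_of_injective
    (f := fun a ↦ ⟨r a, hr a, (hzr a).mono (hz a 0) le_rfl⟩) fun a b hab ↦ ?_⟩
  have hrab : r a = r b := congrArg Subtype.val hab
  by_contra hne
  let k := PiNat.firstDiff a b
  have hres : PiNat.res a k = PiNat.res b k :=
    PiNat.res_eq_res.2 fun _ hm ↦ PiNat.apply_eq_of_lt_firstDiff hm
  refine PiNat.apply_firstDiff_ne hne (t_injective (node (PiNat.res a k)) ?_)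
  exact (hL.isMaximalAntichain _ (hα _)).eq_of_compatible (hty _ _).1 (hty _ _).1
    ⟨r a, r_le a k, by rw [hrab, hres]; exact r_le b k⟩

theorem exists_le (hL : IsBaseMatrix o L) (hsep : IsSeparative P) (hclosed : IsSigmaClosed P)
    (x : P) : ∃ α < o, ∃ s ∈ L α, s ≤ x := by
  have : Nonempty P := ⟨x⟩
  obtain ⟨β, hβ, hxβ⟩ := hL.exists_continuum_le_mk_compatible hsep hclosed x
  have hβ' : Order.succ β < o := hL.succ_lt hclosed hβ
  exact ⟨_, hβ', (hL.isBaseRefinement _ hβ' β (Order.lt_succ β)).exists_le x hxβ⟩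

end IsBaseMatrix

/-- The nodes of the tree with levels `L α` for `α < o`. -/
def rowUnion (o : Ordinal.{u}) (L : Ordinal.{u} → Set P) : Set P := ⋃ α ∈ Iio o, L α

/-- `T` is a base tree for `P` of height `o` with levels `L`: the analogue of `IsBaseTree` for an
arbitrary preorder. The strict predecessors of `x` in `T` are `T ∩ Ioi x`, as the tree grows
downwards. -/
structure IsBaseTreeOfHeight (o : Ordinal.{u}) (T : Set P) (L : Ordinal.{u} → Set P) : Prop where
  isCoinitial : IsCoinitial T
  isWellOrder : ∀ x ∈ T, IsWellOrder ↥(T ∩ Ioi x) (· > ·)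
  mem_level_iff : ∀ α < o, ∀ x,
    x ∈ L α ↔ ∃ hx : x ∈ T, @Ordinal.type ↥(T ∩ Ioi x) (· > ·) (isWellOrder x hx) = α
  exists_mem_level : ∀ x ∈ T, ∃ α < o, x ∈ L α
  isMaximalAntichain : ∀ α < o, IsMaximalAntichain (L α)
  mk_immediate_successors : ∀ y ∈ T, #{x // x ∈ T ∧ T ∩ Ioi x = T ∩ Ioi y ∪ {y}} = 𝔠

namespace IsBaseMatrix

variable {o α : Ordinal.{u}} {L : Ordinal.{u} → Set P} {x y : P}

theorem mem_rowUnion_inter_Ioi_iff (hL : IsBaseMatrix o L) (hα : α < o) (hx : x ∈ L α) :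
    y ∈ rowUnion o L ∩ Ioi x ↔ ∃ β < α, y ∈ L β ∧ x ≤ y := by
  constructor
  · rintro ⟨hy, hxy⟩
    obtain ⟨β, hβ, hyβ⟩ := mem_iUnion₂.1 hy
    exact ⟨β, (hL.lt_iff_of_compatible hα hβ hx hyβ (.of_le hxy.le)).1 hxy, hyβ, hxy.le⟩
  · rintro ⟨β, hβ, hyβ, hxy⟩
    have hβo := hβ.trans hα
    exact ⟨mem_biUnion hβo hyβ, (hL.lt_iff_of_compatible hα hβo hx hyβ (.of_le hxy)).2 hβ⟩

theorem nonempty_relIso_rowUnion_inter_Ioi (hL : IsBaseMatrix o L) (hα : α < o) (hx : x ∈ L α) :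
    Nonempty ((· < · : α.ToType → α.ToType → Prop) ≃r
      (· > · : ↥(rowUnion o L ∩ Ioi x) → ↥(rowUnion o L ∩ Ioi x) → Prop)) := by
  choose f hfL hxf using fun β : Iio α ↦ hL.exists_ge (le_of_lt β.2) hα hx
  let F (β : Iio α) : ↥(rowUnion o L ∩ Ioi x) :=
    ⟨f β, (hL.mem_rowUnion_inter_Ioi_iff hα hx).2 ⟨β, β.2, hfL β, hxf β⟩⟩
  have F_strictAnti {β γ : Iio α} (h : β < γ) : F β > F γ :=
    (hL.lt_iff_of_compatible (lt_trans γ.2 hα) (lt_trans β.2 hα) (hfL γ) (hfL β)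
      ⟨x, hxf γ, hxf β⟩).2 h
  have F_surjective : Function.Surjective F := by
    rintro ⟨y, hy⟩
    obtain ⟨β, hβ, hyβ, hxy⟩ := (hL.mem_rowUnion_inter_Ioi_iff hα hx).1 hy
    exact ⟨⟨β, hβ⟩, Subtype.ext <| (hL.isMaximalAntichain β (hβ.trans hα)).eq_of_compatible
      (hfL ⟨β, hβ⟩) hyβ ⟨x, hxf ⟨β, hβ⟩, hxy⟩⟩
  let toIio : α.ToType ≃o Iio α := Ordinal.ToType.mk.symm
  exact ⟨RelIso.ofSurjective
    (.ofMonotone (fun a ↦ F (toIio a)) fun a b hab ↦ F_strictAnti (toIio.strictMono hab))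
    (F_surjective.comp toIio.surjective)⟩

theorem isWellOrder_rowUnion_inter_Ioi (hL : IsBaseMatrix o L) (hα : α < o) (hx : x ∈ L α) :
    IsWellOrder ↥(rowUnion o L ∩ Ioi x) (· > ·) :=
  let ⟨e⟩ := hL.nonempty_relIso_rowUnion_inter_Ioi hα hx
  e.symm.toRelEmbedding.isWellOrder

theorem type_rowUnion_inter_Ioi (hL : IsBaseMatrix o L) (hα : α < o) (hx : x ∈ L α)
    (hwo : IsWellOrder ↥(rowUnion o L ∩ Ioi x) (· > ·)) :
    @Ordinal.type ↥(rowUnion o L ∩ Ioi x) (· > ·) hwo = α := by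
  obtain ⟨e⟩ := hL.nonempty_relIso_rowUnion_inter_Ioi hα hx
  exact e.ordinalType_congr.symm.trans (Ordinal.type_toType α)

theorem rowUnion_inter_Ioi_succ (hL : IsBaseMatrix o L) (hα : Order.succ α < o)
    (hx : x ∈ L (Order.succ α)) (hy : y ∈ L α) (hxy : x ≤ y) :
    rowUnion o L ∩ Ioi x = rowUnion o L ∩ Ioi y ∪ {y} := by
  have hαo : α < o := (Order.lt_succ α).trans hα
  ext z
  rw [mem_union, hL.mem_rowUnion_inter_Ioi_iff hα hx, hL.mem_rowUnion_inter_Ioi_iff hαo hy,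
    mem_singleton_iff]
  constructor
  · rintro ⟨β, hβ, hz, hxz⟩
    have hyz : Compatible y z := ⟨x, hxy, hxz⟩
    rcases (Order.lt_succ_iff.1 hβ).eq_or_lt with rfl | hβα
    · exact .inr ((hL.isMaximalAntichain β hαo).eq_of_compatible hz hy hyz.symm)
    · exact .inl ⟨β, hβα, hz, hL.le_of_compatible hβα.le hαo hy hz hyz⟩
  · rintro (⟨β, hβα, hz, hyz⟩ | rfl)
    · exact ⟨β, hβα.trans (Order.lt_succ α), hz, hxy.trans hyz⟩
    · exact ⟨α, Order.lt_succ α, hy, hxy⟩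

theorem continuum_le_mk_immediate_successors (hL : IsBaseMatrix o L) (hα : Order.succ α < o)
    (hy : y ∈ L α) :
    𝔠 ≤ #{x // x ∈ rowUnion o L ∧ rowUnion o L ∩ Ioi x = rowUnion o L ∩ Ioi y ∪ {y}} :=
  ((hL.isBaseRefinement _ hα α (Order.lt_succ α)).continuum_le_mk_inter_Iic y hy).trans <|
    mk_le_mk_of_subset fun _ hx ↦
      ⟨mem_biUnion hα hx.1, hL.rowUnion_inter_Ioi_succ hα hx.1 hy hx.2⟩

theorem isBaseTreeOfHeight (hL : IsBaseMatrix o L) (hsep : IsSeparative P)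
    (hclosed : IsSigmaClosed P) (hcard : #P ≤ 𝔠) : IsBaseTreeOfHeight o (rowUnion o L) L where
  isCoinitial x :=
    let ⟨_, hα, s, hs, hsx⟩ := hL.exists_le hsep hclosed x
    ⟨s, mem_biUnion hα hs, hsx⟩
  isWellOrder x hx :=
    let ⟨_, hα, hxα⟩ := mem_iUnion₂.1 hx
    hL.isWellOrder_rowUnion_inter_Ioi hα hxα
  mem_level_iff α hα x := by
    refine ⟨fun hx ↦ ⟨mem_biUnion hα hx, hL.type_rowUnion_inter_Ioi hα hx _⟩, ?_⟩
    rintro ⟨hx, rfl⟩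
    obtain ⟨β, hβ, hxβ⟩ := mem_iUnion₂.1 hx
    rwa [hL.type_rowUnion_inter_Ioi hβ hxβ]
  exists_mem_level x hx :=
    let ⟨α, hα, hxα⟩ := mem_iUnion₂.1 hx
    ⟨α, hα, hxα⟩
  isMaximalAntichain := hL.isMaximalAntichain
  mk_immediate_successors y hy := by
    have : Nonempty P := ⟨y⟩
    obtain ⟨α, hα, hyα⟩ := mem_iUnion₂.1 hy
    exact ((mk_subtype_le _).trans hcard).antisymm
      (hL.continuum_le_mk_immediate_successors (hL.succ_lt hclosed hα) hyα)

end IsBaseMatrix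

theorem stmt8_general {P : Type u} [Preorder P] (hsep : IsSeparative P) (hclosed : IsSigmaClosed P)
    (hself : IsDenselySelfSimilar P) (hcard : #P ≤ 𝔠)
    (hanti : ∃ A : Set P, IsStrongAntichain (· ≥ ·) A ∧ 𝔠 ≤ #A) :
    ∃ (T : Set P) (L : Ordinal.{u} → Set P),
      IsBaseTreeOfHeight (distributivityNumber P).ord T L := by
  obtain ⟨A, hA, hAc⟩ := hanti
  have : Nonempty P := (mk_ne_zero_iff.1 (continuum_pos.trans_le hAc).ne').map Subtype.val
  obtain ⟨L, hL⟩ := exists_isBaseMatrix hcard hself (hself.hasContinuumAntichains hA hAc)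
  exact ⟨_, L, hL.isBaseTreeOfHeight hsep hclosed hcard⟩

end Forcing

theorem exists_pseudoIntersection {s : ℕ → Set ℕ} (hinf : ∀ k, (s k).Infinite)
    (hs : ∀ j k, j ≤ k → (s k \ s j).Finite) :
    ∃ z : Set ℕ, z.Infinite ∧ ∀ k, (z \ s k).Finite := by
  have inter_infinite (k : ℕ) : {m | ∀ j ≤ k, m ∈ s j}.Infinite := by
    have hfin : (⋃ j ∈ Iic k, s k \ s j).Finite := (finite_Iic k).biUnion fun j hj ↦ hs j k hj
    refine ((hinf k).sdiff hfin).mono ?_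
    rintro m ⟨hmk, hm⟩ j hj
    by_contra hmj
    exact hm (mem_biUnion hj ⟨hmk, hmj⟩)
  obtain ⟨φ, hφ, hφs⟩ := Filter.extraction_forall_of_frequently fun k ↦
    Nat.frequently_atTop_iff_infinite.2 (inter_infinite k)
  refine ⟨range φ, infinite_range_of_injective hφ.injective, fun k ↦ ?_⟩
  refine ((finite_Iio k).image φ).subset ?_
  rintro _ ⟨⟨m, rfl⟩, hm⟩
  exact mem_image_of_mem φ (not_le.1 fun hkm ↦ hm (hφs m k hkm))

/-- The codes of the finite initial segments of `a`. The sets `branchSet a` form an almost disjoint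
family of size continuum. -/
def branchSet (a : ℕ → Bool) : Set ℕ := range fun k ↦ Encodable.encode (PiNat.res a k)

theorem infinite_branchSet (a : ℕ → Bool) : (branchSet a).Infinite := by
  refine infinite_range_of_injective fun j k hjk ↦ ?_
  simpa using congrArg List.length (Encodable.encode_injective hjk)

theorem finite_branchSet_inter {a b : ℕ → Bool} (hab : a ≠ b) :
    (branchSet a ∩ branchSet b).Finite := by
  refine ((finite_Iic (PiNat.firstDiff a b)).image fun k ↦
    Encodable.encode (PiNat.res a k)).subset ?_
  rintro _ ⟨⟨j, rfl⟩, k, hkj⟩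
  have hres : PiNat.res b k = PiNat.res a j := Encodable.encode_injective hkj
  obtain rfl : k = j := by simpa using congrArg List.length hres
  refine mem_image_of_mem _ (mem_Iic.2 (not_lt.1 fun hlt ↦ PiNat.apply_firstDiff_ne hab ?_))
  exact (PiNat.res_eq_res.1 hres hlt).symm

namespace Pn

variable {n : ℕ} {x y : Pn n}

instance : Preorder (Pn n) where
  le := PnLE
  le_refl x i := by simp
  le_trans x y z hxy hyz i := ((hxy i).union (hyz i)).subset (sdiff_triangle _ _ _)

theorem le_of_forall_subset (h : ∀ i, x.1 i ⊆ y.1 i) : x ≤ y := fun i ↦ by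
  simp [sdiff_eq_empty.2 (h i)]

theorem inter_infinite_of_le (h : x ≤ y) (i : Fin n) : (x.1 i ∩ y.1 i).Infinite :=
  sdiff_sdiff_right_self (x.1 i) (y.1 i) ▸ (x.2 i).sdiff (h i)

theorem compatible_iff : Compatible x y ↔ PnCompat x y := by
  refine ⟨fun ⟨z, hzx, hzy⟩ i ↦ ?_, fun h ↦ ⟨⟨fun i ↦ x.1 i ∩ y.1 i, h⟩,
    le_of_forall_subset fun i ↦ inter_subset_left, le_of_forall_subset fun i ↦ inter_subset_right⟩⟩
  refine ((z.2 i).sdiff ((hzx i).union (hzy i))).mono ?_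
  rw [← sdiff_inter, sdiff_sdiff_right_self]
  exact inter_subset_right

theorem isSeparative : IsSeparative (Pn n) := by
  intro x t hxt
  obtain ⟨i, hi⟩ := not_forall.1 hxt
  let y : Pn n := ⟨Function.update x.1 i (x.1 i \ t.1 i),
    (Function.forall_update_iff x.1 fun _ s ↦ s.Infinite).2 ⟨hi, fun j _ ↦ x.2 j⟩⟩
  have hyi : y.1 i = x.1 i \ t.1 i := Function.update_self ..
  refine ⟨y, le_of_forall_subset ?_, fun hyt ↦ ?_⟩
  · exact (Function.forall_update_iff x.1 fun j s ↦ s ⊆ x.1 j).2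
      ⟨sdiff_subset, fun j _ ↦ subset_rfl⟩
  · have inter_infinite : (y.1 i ∩ t.1 i).Infinite := compatible_iff.1 hyt i
    simp [hyi] at inter_infinite

theorem isSigmaClosed : IsSigmaClosed (Pn n) := fun s hs ↦ by
  choose z hz hzs using fun i : Fin n ↦ exists_pseudoIntersection (s := fun k ↦ (s k).1 i)
    (fun k ↦ (s k).2 i) fun j k hjk ↦ hs hjk i
  exact ⟨⟨z, hz⟩, fun k i ↦ hzs i k⟩

/-- The increasing enumeration of the coordinate `x i`. -/
noncomputable def enum (x : Pn n) (i : Fin n) : ℕ → ℕ := Nat.nth (· ∈ x.1 i)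

theorem enum_injective (x : Pn n) (i : Fin n) : Function.Injective (x.enum i) :=
  Nat.nth_injective (x.2 i)

theorem range_enum (x : Pn n) (i : Fin n) : range (x.enum i) = x.1 i :=
  Nat.range_nth_of_infinite (x.2 i)

/-- The copy of `Pn n` in the cone below `x` obtained by transporting each coordinate along the
increasing enumeration of `x i`. -/
noncomputable def toCone (x : Pn n) : Pn n ↪o Iic x where
  toFun y := ⟨⟨fun i ↦ x.enum i '' y.1 i, fun i ↦ (y.2 i).image (x.enum_injective i).injOn⟩,
    le_of_forall_subset fun i ↦ (image_subset_range _ _).trans (x.range_enum i).subset⟩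
  inj' y z hyz := Subtype.ext <| funext fun i ↦ (x.enum_injective i).image_injective <|
    congrArg (fun w : Iic x ↦ w.1.1 i) hyz
  map_rel_iff' {y z} := forall_congr' fun i ↦ by
    change (x.enum i '' y.1 i \ x.enum i '' z.1 i).Finite ↔ _
    rw [← image_sdiff (x.enum_injective i), finite_image_iff (x.enum_injective i).injOn]

theorem isDenselySelfSimilar : IsDenselySelfSimilar (Pn n) := by
  refine fun x ↦ ⟨x.toCone, fun ⟨z, hzx⟩ ↦ ?_⟩
  have image_preimage (i : Fin n) : x.enum i '' (x.enum i ⁻¹' z.1 i) = z.1 i ∩ x.1 i := by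
    rw [image_preimage_eq_inter_range, range_enum]
  let y : Pn n := ⟨fun i ↦ x.enum i ⁻¹' z.1 i, fun i ↦
    .of_image _ (image_preimage i ▸ inter_infinite_of_le hzx i)⟩
  refine ⟨x.toCone y, mem_range_self y, le_of_forall_subset fun i ↦ ?_⟩
  exact (image_preimage i).subset.trans inter_subset_left

theorem mk_le_continuum : #(Pn n) ≤ 𝔠 := by
  have mk_tuples : #(Fin n → Set ℕ) ≤ 𝔠 := by
    simpa using power_nat_le aleph0_le_continuum (n := n)
  exact (mk_subtype_le _).trans mk_tuples

theorem exists_isStrongAntichain_continuum (hn : 0 < n) :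
    ∃ A : Set (Pn n), IsStrongAntichain (· ≥ ·) A ∧ 𝔠 ≤ #A := by
  let f (a : ℕ → Bool) : Pn n := ⟨fun _ ↦ branchSet a, fun _ ↦ infinite_branchSet a⟩
  have eq_of_compatible {a b} (h : Compatible (f a) (f b)) : a = b :=
    of_not_not fun hab ↦ compatible_iff.1 h ⟨0, hn⟩ (finite_branchSet_inter hab)
  refine ⟨range f, isStrongAntichain_iff_eq_of_compatible.2 ?_, ?_⟩
  · rintro _ ⟨a, rfl⟩ _ ⟨b, rfl⟩ hab
    rw [eq_of_compatible hab]
  · exact continuum_le_mk_of_injective (f := rangeFactorization f) fun a b hab ↦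
      eq_of_compatible (.of_le (congrArg Subtype.val hab).le)

theorem distributivityNumber_eq_hdist : distributivityNumber (Pn n) = hdist n := by
  have isLowerSet_iff (D : Set (Pn n)) : IsLowerSet D ↔ PnOpen D := forall_comm
  simp only [distributivityNumber, isLowerSet_iff]
  rfl

end Pn

theorem IsBaseTreeOfHeight.isBaseTree {n : ℕ} {T : Set (Pn n)} {L : Ordinal → Set (Pn n)}
    (h : IsBaseTreeOfHeight (hdist n).ord T L) : IsBaseTree n T L where
  dense := h.isCoinitial
  wellOrdered := h.isWellOrder
  level_eq := h.mem_level_iff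
  level_nonempty α hα :=
    let ⟨s, hs, _⟩ := (h.isMaximalAntichain α hα).exists_compatible
      ⟨fun _ ↦ univ, fun _ ↦ infinite_univ⟩
    ⟨s, hs⟩
  level_covers := h.exists_mem_level
  level_antichain α hα _ hx _ hy hne hxy :=
    hne ((h.isMaximalAntichain α hα).eq_of_compatible hx hy (Pn.compatible_iff.2 hxy))
  level_maximal α hα z :=
    let ⟨x, hx, hzx⟩ := (h.isMaximalAntichain α hα).exists_compatible z
    ⟨x, hx, Pn.compatible_iff.1 hzx⟩
  succ_card := h.mk_immediate_successors

/-- For every `0 < n < ω` there exists a base tree for `Pn n` of height `𝔥(n)`. -/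
theorem stmt8 (n : ℕ) (hn : 0 < n) :
    ∃ (T : Set (Pn n)) (L : Ordinal → Set (Pn n)), IsBaseTree n T L := by
  obtain ⟨T, L, hT⟩ := stmt8_general Pn.isSeparative Pn.isSigmaClosed Pn.isDenselySelfSimilar
    Pn.mk_le_continuum (Pn.exists_isStrongAntichain_continuum hn)
  exact ⟨T, L, (Pn.distributivityNumber_eq_hdist ▸ hT).isBaseTree⟩
end
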